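/- arXiv:1305.6547 — 4 statements merged into one kernel-verified Lean document; each statement's English description precedes it below -/
import Mathlib

section
/- Let G be a countable discrete group and π: G → O(H) an orthogonal representation on a real Hilbert space H. (i) If α: G → H is an array for π, then the map α⋆(g) := π_g(α(g⁻¹)) is large scale lipschitz. (ii) Conversely, if f: G → H is large scale lipschitz, then the map f⋆(g) := π_g(f(g⁻¹)) is an array for π. -/
/-!
Since each `π g` is an isometry, the passage `α ↦ α⋆`, `α⋆ g = π g (α g⁻¹)`, exchanges the two
kinds of defect: `‖α⋆ g - α⋆ (g s)‖ = ‖π s⁻¹ (α g⁻¹) - α (s⁻¹ g⁻¹)‖` and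
`‖π g (f⋆ h) - f⋆ (g h)‖ = ‖f h⁻¹ - f (h⁻¹ g⁻¹)‖`. For (i), apply the array bound to the
singletons `{s⁻¹}`; for (ii), bound the finitely many constants `C g⁻¹`, `g ∈ F`, by their sum.
-/

open Filter Topology
open scoped RealInnerProductSpace

noncomputable section

/-- The word length of `g` with respect to a generating set `S`
(`sInf` of lengths of words in `S` representing `g`). -/
def wordLength {G : Type*} [Group G] (S : Finset G) (g : G) : ℕ :=
  sInf {n | ∃ l : List G, l.length = n ∧ (∀ x ∈ l, x ∈ S) ∧ l.prod = g}

/-- `S` is a finite symmetric generating set. -/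
def IsSymmGen {G : Type*} [Group G] (S : Finset G) : Prop :=
  (∀ s ∈ S, s⁻¹ ∈ S) ∧ Subgroup.closure (S : Set G) = ⊤

/-- A Reiter sequence: probability measures `μ n` on `G` with `‖μ n - g ∗ μ n‖₁ → 0`
for every `g ∈ G`. -/
def IsReiterSeq {G : Type*} [Group G] (μ : ℕ → G → ℝ) : Prop :=
  (∀ n g, 0 ≤ μ n g) ∧ (∀ n, Summable (μ n)) ∧ (∀ n, ∑' g, μ n g = 1) ∧
    ∀ g : G, Tendsto (fun n => ∑' h, |μ n h - μ n (g⁻¹ * h)|) atTop (𝓝 0)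

/-- A 1-cocycle for the orthogonal representation `π`. -/
def IsCocycle {G H : Type*} [Group G] [NormedAddCommGroup H] [InnerProductSpace ℝ H]
    (π : G →* (H ≃ₗᵢ[ℝ] H)) (b : G → H) : Prop :=
  ∀ g h : G, b (g * h) = π g (b h) + b g

/-- An orthogonal representation is ergodic if its only invariant vector is `0`. -/
def IsErgodicRep {G H : Type*} [Group G] [NormedAddCommGroup H] [InnerProductSpace ℝ H]
    (π : G →* (H ≃ₗᵢ[ℝ] H)) : Prop :=
  ∀ ξ : H, (∀ g : G, π g ξ = ξ) → ξ = 0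

/-- An array for the orthogonal representation `π`: a boundedly equivariant map `α : G → H`,
i.e. for every finite `F ⊆ G` there is `K ≥ 0` with `‖π g (α h) - α (g h)‖ ≤ K` for all
`g ∈ F`, `h ∈ G`. -/
def IsArray {G H : Type*} [Group G] [NormedAddCommGroup H] [InnerProductSpace ℝ H]
    (π : G →* (H ≃ₗᵢ[ℝ] H)) (α : G → H) : Prop :=
  ∀ F : Finset G, ∃ K : ℝ, 0 ≤ K ∧ ∀ g ∈ F, ∀ h : G, ‖π g (α h) - α (g * h)‖ ≤ K

/-- A map `f : G → V` into a normed vector space is large scale lipschitz if there is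
`C : G → ℝ≥0` with `‖f g - f (g s)‖ ≤ C s` for all `g, s ∈ G`. -/
def LargeScaleLipschitz {G V : Type*} [Group G] [NormedAddCommGroup V] (f : G → V) : Prop :=
  ∃ C : G → ℝ, (∀ s, 0 ≤ C s) ∧ ∀ g s : G, ‖f g - f (g * s)‖ ≤ C s

/-- **Arrays are formal adjoints of large scale lipschitz maps.**
(i) If `α : G → H` is an array for `π`, then `α⋆(g) := π g (α g⁻¹)` is large scale lipschitz.
(ii) Conversely, if `f : G → H` is large scale lipschitz, then `f⋆(g) := π g (f g⁻¹)` is an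
array for `π`. -/
theorem array_adjoint_largeScaleLipschitz {G H : Type*} [Group G] [Countable G]
    [NormedAddCommGroup H] [InnerProductSpace ℝ H] [CompleteSpace H]
    (π : G →* (H ≃ₗᵢ[ℝ] H)) :
    (∀ α : G → H, IsArray π α → LargeScaleLipschitz (fun g => π g (α g⁻¹))) ∧
    (∀ f : G → H, LargeScaleLipschitz f → IsArray π (fun g => π g (f g⁻¹))) := by
  have hmul : ∀ (a b : G) (x : H), π a (π b x) = π (a * b) x := fun a b x => by
    rw [map_mul, LinearIsometryEquiv.coe_mul, Function.comp_apply]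
  constructor
  · intro α hα
    choose K hK0 hK using fun s : G => hα {s⁻¹}
    refine ⟨K, hK0, fun g s => ?_⟩
    -- Factoring out the isometry `π (g * s)` leaves the array defect of `α` at `(s⁻¹, g⁻¹)`.
    have key : π g (α g⁻¹) - π (g * s) (α (g * s)⁻¹)
        = π (g * s) (π s⁻¹ (α g⁻¹) - α (s⁻¹ * g⁻¹)) := by
      rw [map_sub, hmul, mul_inv_cancel_right, mul_inv_rev]
    simp only [key, LinearIsometryEquiv.norm_map]
    exact hK s s⁻¹ (Finset.mem_singleton_self _) g⁻¹
  · rintro f ⟨C, hC0, hC⟩ F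
    refine ⟨∑ g ∈ F, C g⁻¹, Finset.sum_nonneg fun g _ => hC0 _, fun g hg h => ?_⟩
    -- Factoring out the isometry `π (g * h)` leaves the increment of `f` from `h⁻¹` to `h⁻¹ * g⁻¹`.
    have key : π g (π h (f h⁻¹)) - π (g * h) (f (g * h)⁻¹)
        = π (g * h) (f h⁻¹ - f (h⁻¹ * g⁻¹)) := by
      rw [map_sub, hmul, mul_inv_rev]
    simp only [key, LinearIsometryEquiv.norm_map]
    exact (hC h⁻¹ g⁻¹).trans
      (Finset.single_le_sum (f := fun g => C g⁻¹) (fun g _ => hC0 _) hg)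
end
end

section
/- Let G be a finitely generated amenable group with finite symmetric generating set S. Let f: G → ℝ be a higson function such that ∑_{g ∈ G} μ_n(g) · f(g⁻¹) → 0 as n → ∞ for every Reiter sequence (μ_n) on G. Then f ∈ C₀(G), i.e., f(g) → 0 as g leaves finite subsets of G. -/
/-!
Suppose `f ∉ C₀(G)`, so that `ε ≤ |f k|` for infinitely many `k`. The higson condition propagates
from the generators to all of `G`: for each `x`, `f (k * x) - f k → 0` as `k → ∞`
(`tendsto_translate_sub`). By dominated convergence, for every probability measure `μ` the averages
`∑ x, μ x * f (k * x⁻¹)` are therefore close to `f k` for `k` far away (`tendsto_average_sub`).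

The Reiter condition concerns left translations, so it survives an arbitrary right translation of
each term: if `(μ n)` is a Reiter sequence, so is `ν n h = μ n (h * k n)`
(`IsReiterSeq.rightTranslate`). Since `∑ h, ν n h * f h⁻¹ = ∑ x, μ n x * f (k n * x⁻¹)`, choosing
`k n` with `ε ≤ |f (k n)|` and far enough for `μ n` keeps the averages of `f` against `ν n` at
distance at least `ε / 2` from `0`, against the hypothesis.
-/

open Filter Topology
open scoped RealInnerProductSpace

noncomputable section

/-- The euclidean norm of the variation `δf(g) ∈ ℝ^S`, `δf(g)(s) = f(g) - f(gs)`. -/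
def delNorm {G : Type*} [Group G] (S : Finset G) (f : G → ℝ) (g : G) : ℝ :=
  Real.sqrt (∑ s ∈ S, (f g - f (g * s)) ^ 2)

/-- A bounded function `f : G → ℝ` is higson if `g ↦ ‖δf(g)‖` tends to `0` as `g` leaves
finite subsets of `G`. -/
def IsHigson {G : Type*} [Group G] (S : Finset G) (f : G → ℝ) : Prop :=
  (∃ M : ℝ, ∀ g, |f g| ≤ M) ∧ Tendsto (delNorm S f) cofinite (𝓝 0)

theorem tendsto_translate_sub {G : Type*} [Group G] {S : Finset G}
    (hS : Subgroup.closure (S : Set G) = ⊤) {f : G → ℝ}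
    (hf : Tendsto (delNorm S f) cofinite (𝓝 0)) (x : G) :
    Tendsto (fun k => f (k * x) - f k) cofinite (𝓝 0) := by
  have hx : x ∈ Subgroup.closure (S : Set G) := hS ▸ Subgroup.mem_top x
  have htrans : ∀ y : G, Tendsto (fun k : G => k * y) cofinite cofinite := fun y =>
    (mul_left_injective y).tendsto_cofinite
  induction hx using Subgroup.closure_induction with
  | mem s hs =>
    refine squeeze_zero_norm (fun k => ?_) hf
    rw [Real.norm_eq_abs, abs_sub_comm]
    refine Real.abs_le_sqrt ?_
    exact Finset.single_le_sum (f := fun s => (f k - f (k * s)) ^ 2)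
      (fun _ _ => sq_nonneg _) hs
  | one => simpa using tendsto_const_nhds
  | mul y z _ _ hy hz =>
    have h := (hz.comp (htrans y)).add hy
    simpa [Function.comp_def, mul_assoc] using h
  | inv y _ hy =>
    have h := (hy.comp (htrans y⁻¹)).neg
    simpa [Function.comp_def, mul_assoc] using h

theorem tendsto_average_sub {G : Type*} [Group G] {S : Finset G}
    (hS : Subgroup.closure (S : Set G) = ⊤) {f : G → ℝ} (hf : IsHigson S f)
    {μ : G → ℝ} (h0 : ∀ g, 0 ≤ μ g) (hs : Summable μ) (h1 : ∑' g, μ g = 1) :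
    Tendsto (fun k => ∑' x, μ x * f (k * x⁻¹) - f k) cofinite (𝓝 0) := by
  obtain ⟨⟨M, hM⟩, hd⟩ := hf
  have hsum : ∀ k, Summable fun x => μ x * f (k * x⁻¹) := fun k => by
    refine Summable.of_norm_bounded (hs.mul_right M) fun x => ?_
    rw [Real.norm_eq_abs, abs_mul, abs_of_nonneg (h0 x)]
    exact mul_le_mul_of_nonneg_left (hM _) (h0 x)
  have heq : ∀ k, ∑' x, μ x * f (k * x⁻¹) - f k = ∑' x, μ x * (f (k * x⁻¹) - f k) := fun k => by
    simp_rw [mul_sub]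
    rw [(hsum k).tsum_sub (hs.mul_right _), tsum_mul_right, h1, one_mul]
  simp_rw [heq]
  have key := tendsto_tsum_of_dominated_convergence (𝓕 := cofinite)
    (f := fun k x => μ x * (f (k * x⁻¹) - f k)) (g := fun _ => (0 : ℝ))
    (hs.mul_right (2 * M))
    (fun x => by simpa using (tendsto_translate_sub hS hd x⁻¹).const_mul (μ x))
    (Eventually.of_forall fun k x => by
      rw [Real.norm_eq_abs, abs_mul, abs_of_nonneg (h0 x)]
      refine mul_le_mul_of_nonneg_left ?_ (h0 x)
      have := abs_sub (f (k * x⁻¹)) (f k)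
      linarith [hM (k * x⁻¹), hM k])
  simpa using key

theorem IsReiterSeq.rightTranslate {G : Type*} [Group G] {μ : ℕ → G → ℝ} (hμ : IsReiterSeq μ)
    (k : ℕ → G) : IsReiterSeq fun n h => μ n (h * k n) := by
  obtain ⟨h0, hs, h1, hr⟩ := hμ
  refine ⟨fun n g => h0 n _, fun n => (hs n).comp_injective (mul_left_injective (k n)),
    fun n => ?_, fun g => ?_⟩
  · rw [← h1 n]
    exact (Equiv.mulRight (k n)).tsum_eq (μ n)
  · refine (hr g).congr fun n => ?_
    rw [← (Equiv.mulRight (k n)).tsum_eq]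
    simp [mul_assoc]

/-- **Rigidity of higson functions under ergodic averaging.** If `f` is a higson function on
a finitely generated amenable group such that `∑ g, μ n g · f(g⁻¹) → 0` for every Reiter
sequence `(μ n)`, then `f ∈ C₀(G)`. -/
theorem higson_rigidity {G : Type*} [Group G] [Countable G]
    (S : Finset G) (hS : IsSymmGen S)
    (hamen : ∃ μ : ℕ → G → ℝ, IsReiterSeq μ)
    (f : G → ℝ) (hf : IsHigson S f)
    (havg : ∀ μ : ℕ → G → ℝ, IsReiterSeq μ →
      Tendsto (fun n => ∑' g : G, μ n g * f g⁻¹) atTop (𝓝 0)) :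
    Tendsto f cofinite (𝓝 0) := by
  obtain ⟨μ, hμ⟩ := hamen
  by_contra hcon
  obtain ⟨ε, hε, hfreq⟩ : ∃ ε > 0, ∃ᶠ k in cofinite, ε ≤ |f k| := by
    simpa [Metric.tendsto_nhds, Filter.Frequently] using hcon
  have hk : ∀ n, ∃ k, ε ≤ |f k| ∧ |∑' x, μ n x * f (k * x⁻¹) - f k| < ε / 2 := fun n => by
    have h := tendsto_average_sub hS.2 hf (hμ.1 n) (hμ.2.1 n) (hμ.2.2.1 n)
    have h' := (Metric.tendsto_nhds.1 h) (ε / 2) (half_pos hε)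
    simp only [Real.dist_eq, sub_zero] at h'
    exact (hfreq.and_eventually h').exists
  choose k hk1 hk2 using hk
  have hlim := havg _ (hμ.rightTranslate k)
  obtain ⟨n, hn⟩ := ((Metric.tendsto_nhds.1 hlim) (ε / 2) (half_pos hε)).exists
  have heq : ∑' g, μ n (g * k n) * f g⁻¹ = ∑' x, μ n x * f (k n * x⁻¹) := by
    rw [← (Equiv.mulRight (k n)).tsum_eq (fun x => μ n x * f (k n * x⁻¹))]
    simp
  rw [Real.dist_eq, sub_zero, heq] at hn
  have h3 := abs_sub_abs_le_abs_sub (f (k n)) (∑' x, μ n x * f (k n * x⁻¹))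
  rw [abs_sub_comm] at h3
  linarith [hk1 n, hk2 n]
end
end

section
/- Let G be a finitely generated group with finite symmetric generating set S and word length |·|, admitting a K-controlled Følner sequence (F_n). Let π: G → O(H) be an orthogonal representation on a real Hilbert space H and b: G → H a 1-cocycle for π such that for every ξ ∈ H the function g ↦ (1/|g|)·⟨b(g), ξ⟩ lies in C₀(G) (i.e., b is weakly sublinear). Let υ_n be the uniform probability measure on F_n. Then there exists a sequence (μ_k) of finitely supported probability measures, each lying in the convex hull of {υ_n : n ∈ ℕ}, such that the vectors ξ_k := ∑_{g} μ_k(g)·b(g) form a sequence of almost fixed points for the affine isometric action T_g(ξ) = π_g(ξ) + b(g), i.e., ‖T_g(ξ_k) − ξ_k‖ → 0 as k → ∞ for every g ∈ G. -/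
/-! The displacement `T_s ξ_n - ξ_n` of the barycenter `ξ_n` of `b` over `F n` is
`|F n|⁻¹ (∑_{sF n \ F n} b - ∑_{F n \ sF n} b)`. Weak sublinearity gives, for each `ξ` and `ε > 0`,
a constant `C` with `|⟪b g, ξ⟫| ≤ ε |g| + C` for all `g`, and `|g| ≤ diam (F n) + 1` on
`sF n Δ F n`. Hence the pairing of the displacement with `ξ` is at most
`ε |K| + (ε + C) |sF n Δ F n| / |F n|`, so the displacements tend weakly to zero
(`tendsto_inner_displacement`).

Viewing the displacements by all `s ∈ S` as one vector of `S → H`, the Hahn-Banach separation theorem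
puts `0` in the closed convex hull of these vectors (`exists_convex_combination`). As displacement
is an affine function of the point, convex combinations of the `ξ_n` are almost fixed by the
generators, and therefore by all of `G`. -/

open Filter Topology
open scoped RealInnerProductSpace

noncomputable section

/-- The boundary `∂F = ⋃ s ∈ S, (sF Δ F)` of a finite subset `F`. -/
def finsetBoundary {G : Type*} [Group G] [DecidableEq G] (S : Finset G) (F : Finset G) :
    Finset G :=
  S.biUnion fun s =>
    ((F.image fun g => s * g) \ F) ∪ (F \ (F.image fun g => s * g))

/-- `diam F`: the least `m` such that `F ⊆ B(m)`. -/
def finsetDiam {G : Type*} [Group G] (S : Finset G) (F : Finset G) : ℕ :=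
  sInf {m | ∀ g ∈ F, wordLength S g ≤ m}

/-- A `K`-controlled Følner sequence: a Følner sequence `(F n)` of nonempty finite subsets
with `|∂F n| / |F n| ≤ K / diam (F n)` for all `n`. -/
def IsControlledFolnerSeq {G : Type*} [Group G] [DecidableEq G] (S : Finset G) (K : ℝ)
    (F : ℕ → Finset G) : Prop :=
  (∀ n, (F n).Nonempty) ∧
  (∀ g : G, Tendsto
    (fun n => (((((F n).image fun h => g * h) \ F n) ∪
      (F n \ ((F n).image fun h => g * h))).card : ℝ) / (F n).card) atTop (𝓝 0)) ∧
  (∀ n, ((finsetBoundary S (F n)).card : ℝ) / (F n).card ≤ K / finsetDiam S (F n))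

/-- The uniform probability measure on a finite subset `F ⊆ G`. -/
def unifMeasure {G : Type*} [Group G] [DecidableEq G] (F : Finset G) (g : G) : ℝ :=
  if g ∈ F then (F.card : ℝ)⁻¹ else 0

section WordLength

variable {G : Type*} [Group G] {S : Finset G}

lemma exists_word (hS : IsSymmGen S) (g : G) :
    ∃ l : List G, l.length = wordLength S g ∧ (∀ x ∈ l, x ∈ S) ∧ l.prod = g := by
  have hg : g ∈ Subgroup.closure (S : Set G) := by rw [hS.2]; trivial
  rw [← Subgroup.mem_toSubmonoid, Subgroup.closure_toSubmonoid] at hg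
  obtain ⟨l, hl, hp⟩ := Submonoid.exists_list_of_mem_closure hg
  refine Nat.sInf_mem (s := {n | ∃ l : List G, l.length = n ∧ (∀ x ∈ l, x ∈ S) ∧ l.prod = g})
    ⟨l.length, l, rfl, fun x hx => ?_, hp⟩
  rcases hl x hx with h | h
  · exact h
  · simpa using hS.1 _ h

lemma eq_one_of_wordLength_eq_zero (hS : IsSymmGen S) {g : G} (h : wordLength S g = 0) :
    g = 1 := by
  obtain ⟨l, hl, -, hp⟩ := exists_word hS g
  rw [h, List.length_eq_zero_iff] at hl
  simpa [hl] using hp.symm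

lemma wordLength_mul_le (hS : IsSymmGen S) {s : G} (hs : s ∈ S) (g : G) :
    wordLength S (s * g) ≤ wordLength S g + 1 := by
  obtain ⟨l, hl, hm, hp⟩ := exists_word hS g
  refine Nat.sInf_le ⟨s :: l, by simp [hl], ?_, by simp [hp]⟩
  intro x hx
  rcases List.mem_cons.1 hx with rfl | hx
  · exact hs
  · exact hm x hx

lemma wordLength_le_finsetDiam {F : Finset G} {g : G} (hg : g ∈ F) :
    wordLength S g ≤ finsetDiam S F :=
  Nat.sInf_mem (s := {m | ∀ g ∈ F, wordLength S g ≤ m})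
    ⟨F.sup (wordLength S), fun _ h => Finset.le_sup h⟩ g hg

end WordLength

section Cocycle

variable {G H : Type*} [Group G] [NormedAddCommGroup H] [InnerProductSpace ℝ H]
  {π : G →* (H ≃ₗᵢ[ℝ] H)} {b : G → H}

/-- The barycenter of `b` over the finite set `F`. -/
def barycenter (b : G → H) (F : Finset G) : H := (F.card : ℝ)⁻¹ • ∑ g ∈ F, b g

/-- The displacement `T_g ξ - ξ` of `ξ` under the affine action `T_g ξ = π g ξ + b g`. -/
def displacement (π : G →* (H ≃ₗᵢ[ℝ] H)) (b : G → H) (g : G) (ξ : H) : H := π g ξ + b g - ξ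

lemma cocycle_one (hb : IsCocycle π b) : b 1 = 0 := by
  simpa using hb 1 1

lemma displacement_barycenter [DecidableEq G] (hb : IsCocycle π b) {F : Finset G}
    (hF : F.Nonempty) (s : G) :
    displacement π b s (barycenter b F) = (F.card : ℝ)⁻¹ •
      (∑ g ∈ (F.image fun h => s * h) \ F, b g - ∑ g ∈ F \ (F.image fun h => s * h), b g) := by
  have hc : (F.card : ℝ) ≠ 0 := by exact_mod_cast hF.card_pos.ne'
  have himg : ∑ g ∈ F.image (fun h => s * h), b g = π s (∑ g ∈ F, b g) + (F.card : ℝ) • b s := by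
    rw [Finset.sum_image (fun x _ y _ h => mul_left_cancel h)]
    simp [hb s, Finset.sum_add_distrib, map_sum, Nat.cast_smul_eq_nsmul]
  rw [Finset.sum_sdiff_sub_sum_sdiff, himg, displacement, barycenter, map_smul, smul_sub, smul_add,
    smul_smul, inv_mul_cancel₀ hc, one_smul]

/-- Weak sublinearity, with the finitely many exceptional group elements absorbed into an
additive constant. -/
lemma exists_inner_bound {S : Finset G} (hS : IsSymmGen S) (hb : IsCocycle π b) (ξ : H)
    (h : Tendsto (fun g => (wordLength S g : ℝ)⁻¹ * ⟪b g, ξ⟫) cofinite (𝓝 0))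
    {ε : ℝ} (hε : 0 < ε) :
    ∃ C : ℝ, 0 ≤ C ∧ ∀ g, |⟪b g, ξ⟫| ≤ ε * wordLength S g + C := by
  have hfin : {g | ¬ |(wordLength S g : ℝ)⁻¹ * ⟪b g, ξ⟫| < ε}.Finite := by
    have := (Metric.tendsto_nhds.1 h) ε hε
    simpa [Real.dist_eq, Filter.eventually_cofinite] using this
  refine ⟨∑ g ∈ hfin.toFinset, |⟪b g, ξ⟫|, Finset.sum_nonneg fun _ _ => abs_nonneg _, fun g => ?_⟩
  by_cases hg : |(wordLength S g : ℝ)⁻¹ * ⟪b g, ξ⟫| < ε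
  · have hC : 0 ≤ ∑ g ∈ hfin.toFinset, |⟪b g, ξ⟫| := Finset.sum_nonneg fun _ _ => abs_nonneg _
    rcases Nat.eq_zero_or_pos (wordLength S g) with h0 | h0
    -- Here the quotient is the junk value `0`; but `g = 1`, where the cocycle vanishes.
    · rw [eq_one_of_wordLength_eq_zero hS h0, cocycle_one hb]
      simp only [inner_zero_left, abs_zero]
      positivity
    · have h0' : (0 : ℝ) < wordLength S g := by exact_mod_cast h0
      rw [abs_mul, abs_of_pos (inv_pos.2 h0'), inv_mul_lt_iff₀ h0'] at hg
      linarith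
  · have h1 : |⟪b g, ξ⟫| ≤ ∑ g ∈ hfin.toFinset, |⟪b g, ξ⟫| :=
      Finset.single_le_sum (f := fun g => |⟪b g, ξ⟫|) (fun _ _ => abs_nonneg _)
        (hfin.mem_toFinset.2 hg)
    have : 0 ≤ ε * (wordLength S g : ℝ) := by positivity
    linarith

lemma tendsto_inner_displacement [DecidableEq G] {S : Finset G} (hS : IsSymmGen S) {K : ℝ}
    {F : ℕ → Finset G} (hF : IsControlledFolnerSeq S K F) (hb : IsCocycle π b) (ξ : H)
    (h : Tendsto (fun g => (wordLength S g : ℝ)⁻¹ * ⟪b g, ξ⟫) cofinite (𝓝 0))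
    {s : G} (hs : s ∈ S) :
    Tendsto (fun n => ⟪displacement π b s (barycenter b (F n)), ξ⟫) atTop (𝓝 0) := by
  obtain ⟨hne, hfol, hctl⟩ := hF
  rw [Metric.tendsto_nhds]
  intro δ hδ
  set ε : ℝ := δ / (2 * (|K| + 1)) with hεdef
  have hε : 0 < ε := by positivity
  have hεK : ε * |K| < δ / 2 := by
    rw [hεdef, div_mul_eq_mul_div, div_lt_div_iff₀ (by positivity) (by norm_num)]
    nlinarith [abs_nonneg K]
  obtain ⟨C, hC, hbound⟩ := exists_inner_bound hS hb ξ h hε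
  have hlim := (hfol s).const_mul (ε + C)
  rw [mul_zero] at hlim
  filter_upwards [hlim.eventually (gt_mem_nhds (half_pos hδ))] with n hn
  have hcard : (0 : ℝ) < (F n).card := by exact_mod_cast (hne n).card_pos
  set A := ((F n).image fun h => s * h) \ F n with hA
  set B := F n \ ((F n).image fun h => s * h) with hB
  set D : ℝ := (finsetDiam S (F n) : ℝ) with hD
  have hD0 : 0 ≤ D := by positivity
  set r : ℝ := ((A ∪ B).card : ℝ) / (F n).card with hr
  have hrD : r * D ≤ |K| := by
    have h1 : r ≤ K / D := by
      refine le_trans ?_ (hctl n)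
      rw [hr]
      gcongr
      exact Finset.subset_biUnion_of_mem (fun s => ((F n).image fun g => s * g) \ F n ∪
        (F n \ ((F n).image fun g => s * g))) hs
    rcases hD0.eq_or_lt with h0 | h0
    · rw [← h0]; simp
    · exact ((le_div_iff₀ h0).1 h1).trans (le_abs_self K)
  have hlen : ∀ g ∈ A ∪ B, |⟪b g, ξ⟫| ≤ ε * (D + 1) + C := by
    intro g hg
    have : wordLength S g ≤ finsetDiam S (F n) + 1 := by
      rcases Finset.mem_union.1 hg with hg | hg
      · obtain ⟨f, hf, rfl⟩ := Finset.mem_image.1 (Finset.mem_sdiff.1 hg).1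
        exact (wordLength_mul_le hS hs f).trans
          (Nat.add_le_add_right (wordLength_le_finsetDiam hf) 1)
      · exact (wordLength_le_finsetDiam (Finset.mem_sdiff.1 hg).1).trans (Nat.le_succ _)
    have h' : (wordLength S g : ℝ) ≤ D + 1 := by rw [hD]; exact_mod_cast this
    refine (hbound g).trans ?_
    gcongr
  have hdisj : Disjoint A B := by
    rw [hA, hB]
    exact disjoint_sdiff_sdiff
  have hsum : |⟪∑ g ∈ A, b g - ∑ g ∈ B, b g, ξ⟫| ≤ (A ∪ B).card * (ε * (D + 1) + C) := by
    rw [inner_sub_left, sum_inner, sum_inner]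
    calc _ ≤ ∑ g ∈ A, |⟪b g, ξ⟫| + ∑ g ∈ B, |⟪b g, ξ⟫| :=
          (abs_sub _ _).trans (add_le_add (Finset.abs_sum_le_sum_abs _ _)
            (Finset.abs_sum_le_sum_abs _ _))
      _ = ∑ g ∈ A ∪ B, |⟪b g, ξ⟫| := (Finset.sum_union hdisj).symm
      _ ≤ _ := by
        rw [← nsmul_eq_mul]
        exact Finset.sum_le_card_nsmul _ _ _ hlen
  rw [Real.dist_eq, sub_zero, displacement_barycenter hb (hne n), real_inner_smul_left, abs_mul,
    abs_of_pos (inv_pos.2 hcard)]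
  calc _ ≤ ((F n).card : ℝ)⁻¹ * ((A ∪ B).card * (ε * (D + 1) + C)) := by gcongr
    _ = ε * (r * D) + (ε + C) * r := by rw [hr]; ring
    _ ≤ ε * |K| + (ε + C) * r := by gcongr
    _ < δ := by linarith

/-- The set of group elements almost fixing a given sequence is a subgroup, so it is enough to
test generators. -/
lemma tendsto_displacement_of_generators (hb : IsCocycle π b) {S : Finset G} (hS : IsSymmGen S)
    (ξ : ℕ → H) (h : ∀ s ∈ S, Tendsto (fun k => ‖displacement π b s (ξ k)‖) atTop (𝓝 0)) (g : G) :
    Tendsto (fun k => ‖displacement π b g (ξ k)‖) atTop (𝓝 0) := by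
  have hg : g ∈ Subgroup.closure (S : Set G) := by rw [hS.2]; trivial
  induction hg using Subgroup.closure_induction with
  | mem s hs => exact h s hs
  | one => simp [displacement, cocycle_one hb]
  | mul x y _ _ hx hy =>
    refine squeeze_zero (fun _ => norm_nonneg _) (fun k => ?_) (by simpa using hy.add hx)
    have : displacement π b (x * y) (ξ k)
        = π x (displacement π b y (ξ k)) + displacement π b x (ξ k) := by
      simp only [displacement, hb x y, map_mul, LinearIsometryEquiv.coe_mul, Function.comp_apply, map_add, map_sub]
      abel
    rw [this]
    exact (norm_add_le _ _).trans (by rw [LinearIsometryEquiv.norm_map])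
  | inv x _ hx =>
    refine hx.congr fun k => ?_
    have h1 : b x = - π x (b x⁻¹) := by
      have := hb x x⁻¹
      rw [mul_inv_cancel, cocycle_one hb] at this
      exact (neg_eq_of_add_eq_zero_right this.symm).symm
    have h2 : π x (π x⁻¹ (ξ k)) = ξ k := by
      rw [← Function.comp_apply (f := π x), ← LinearIsometryEquiv.coe_mul, ← map_mul]; simp
    have : displacement π b x (ξ k) = - π x (displacement π b x⁻¹ (ξ k)) := by
      simp only [displacement, h1, map_add, map_sub, h2]
      abel
    rw [this, norm_neg, LinearIsometryEquiv.norm_map]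

/-- Displacement is affine in the point. -/
lemma displacement_sum (g : G) (T : Finset ℕ) (c : ℕ → ℝ) (hc : ∑ n ∈ T, c n = 1) (ξ : ℕ → H) :
    displacement π b g (∑ n ∈ T, c n • ξ n) = ∑ n ∈ T, c n • displacement π b g (ξ n) := by
  simp only [displacement, smul_sub, smul_add, Finset.sum_sub_distrib, Finset.sum_add_distrib,
    ← Finset.sum_smul, hc, one_smul, map_sum, map_smul]

lemma tsum_unifMeasure [DecidableEq G] (F : ℕ → Finset G) (T : Finset ℕ) (c : ℕ → ℝ) :
    ∑' h : G, (∑ n ∈ T, c n * unifMeasure (F n) h) • b h = ∑ n ∈ T, c n • barycenter b (F n) := by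
  refine HasSum.tsum_eq ?_
  simp only [Finset.sum_smul, mul_smul]
  refine hasSum_sum fun n _ => HasSum.const_smul _ ?_
  have : barycenter b (F n) = ∑ g ∈ F n, unifMeasure (F n) g • b g := by
    rw [barycenter, Finset.smul_sum]
    exact Finset.sum_congr rfl fun g hg => by simp [unifMeasure, hg]
  rw [this]
  exact hasSum_sum_of_ne_finset_zero fun g hg => by simp [unifMeasure, hg]

end Cocycle

/-- Mazur's lemma for finitely many weakly null sequences simultaneously. -/
lemma exists_convex_combination {ι H : Type*} [Fintype ι] [NormedAddCommGroup H]
    [InnerProductSpace ℝ H] [CompleteSpace H] (v : ℕ → ι → H)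
    (hv : ∀ i ξ, Tendsto (fun n => ⟪v n i, ξ⟫) atTop (𝓝 0)) {ε : ℝ} (hε : 0 < ε) :
    ∃ (T : Finset ℕ) (c : ℕ → ℝ), (∀ n ∈ T, 0 ≤ c n) ∧ (∑ n ∈ T, c n = 1) ∧
      ∀ i, ‖∑ n ∈ T, c n • v n i‖ < ε := by
  classical
  have h0 : (0 : ι → H) ∈ closure (convexHull ℝ (Set.range v)) := by
    by_contra hcon
    obtain ⟨f, u, hfu, hu⟩ := geometric_hahn_banach_point_closed
      (convex_convexHull ℝ (Set.range v)).closure isClosed_closure hcon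
    rw [map_zero] at hfu
    have hlim : Tendsto (fun n => f (v n)) atTop (𝓝 0) := by
      have hf : ∀ w : ι → H, f w = ∑ i, ⟪w i, (InnerProductSpace.toDual ℝ H).symm
          (f.comp (ContinuousLinearMap.single ℝ (fun _ : ι => H) i))⟫ := by
        intro w
        conv_lhs => rw [← Finset.univ_sum_single w]
        rw [map_sum]
        refine Finset.sum_congr rfl fun i _ => ?_
        rw [real_inner_comm, InnerProductSpace.toDual_symm_apply]
        rfl
      simp only [hf]
      simpa using tendsto_finsetSum Finset.univ fun i _ => hv i _
    refine absurd (ge_of_tendsto' hlim fun n => (hu (v n) ?_).le) (not_le.2 hfu)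
    exact subset_closure (subset_convexHull ℝ _ ⟨n, rfl⟩)
  obtain ⟨w, hw, hd⟩ := Metric.mem_closure_iff.1 h0 ε hε
  rw [convexHull_range_eq_exists_affineCombination] at hw
  obtain ⟨T, c, hc0, hc1, rfl⟩ := hw
  refine ⟨T, c, hc0, hc1, fun i => ?_⟩
  rw [dist_zero_left, Finset.affineCombination_eq_linear_combination _ _ _ hc1] at hd
  refine lt_of_le_of_lt ?_ hd
  simpa using norm_le_pi_norm (∑ n ∈ T, c n • v n) i

/-- **Almost fixed points from controlled Følner averaging.** Let `G` have a `K`-controlled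
Følner sequence `(F n)` and let `b` be a weakly sublinear 1-cocycle for `π` (i.e.
`g ↦ (1/|g|) ⟪b g, ξ⟫ ∈ C₀(G)` for all `ξ`). Let `υ n` be the uniform measure on `F n`.
Then there are measures `μ k` in the convex hull of `{υ n}` such that the barycenters
`ξ k = ∑ g, μ k g • b g` form almost fixed points for the affine action
`T_g ξ = π g ξ + b g`. -/
theorem almost_fixed_points_of_controlled_folner {G H : Type*} [Group G] [Countable G]
    [DecidableEq G] [NormedAddCommGroup H] [InnerProductSpace ℝ H] [CompleteSpace H]
    (S : Finset G) (hS : IsSymmGen S)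
    (K : ℝ) (F : ℕ → Finset G) (hF : IsControlledFolnerSeq S K F)
    (π : G →* (H ≃ₗᵢ[ℝ] H)) (b : G → H) (hb : IsCocycle π b)
    (hws : ∀ ξ : H, Tendsto (fun g => (wordLength S g : ℝ)⁻¹ * ⟪b g, ξ⟫) cofinite (𝓝 0)) :
    ∃ μ : ℕ → G → ℝ,
      (∀ k, ∃ (T : Finset ℕ) (c : ℕ → ℝ), (∀ n ∈ T, 0 ≤ c n) ∧ (∑ n ∈ T, c n = 1) ∧
        ∀ g : G, μ k g = ∑ n ∈ T, c n * unifMeasure (F n) g) ∧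
      (∀ g : G, Tendsto
        (fun k => ‖π g (∑' h : G, μ k h • b h) + b g - ∑' h : G, μ k h • b h‖)
        atTop (𝓝 0)) := by
  have hex : ∀ k : ℕ, ∃ (T : Finset ℕ) (c : ℕ → ℝ), (∀ n ∈ T, 0 ≤ c n) ∧ (∑ n ∈ T, c n = 1) ∧
      ∀ s : S, ‖∑ n ∈ T, c n • displacement π b s (barycenter b (F n))‖ < 1 / ((k : ℝ) + 1) :=
    fun k => exists_convex_combination
      (fun n (s : S) => displacement π b s (barycenter b (F n)))
      (fun s ξ => tendsto_inner_displacement hS hF hb ξ (hws ξ) s.2) (by positivity)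
  choose T c hc0 hc1 hsmall using hex
  refine ⟨fun k g => ∑ n ∈ T k, c k n * unifMeasure (F n) g,
    fun k => ⟨T k, c k, hc0 k, hc1 k, fun _ => rfl⟩, ?_⟩
  simp only [tsum_unifMeasure]
  refine tendsto_displacement_of_generators hb hS _ fun s hs => ?_
  refine squeeze_zero (fun _ => norm_nonneg _) (fun k => ?_)
    (tendsto_one_div_add_atTop_nhds_zero_nat (𝕜 := ℝ))
  rw [displacement_sum s _ _ (hc1 k)]
  exact (hsmall k ⟨s, hs⟩).le
end
end

section
/- Let G be a finitely generated group with finite symmetric generating set S which is one-ended, i.e., for every r ∈ ℕ the complement of the ball B(r) has exactly one infinite connected component in the Cayley graph of (G, S). Let f: G → ℝ be a bounded function with f ≥ 0, and suppose that ∑_{g ∈ G} ‖f(g)·δf(g)‖ < ∞, where (f·δf)(g)(s) = f(g)·(f(g) − f(gs)) and ‖·‖ is the euclidean norm on ℝ^S. Then there exists a constant c ∈ ℝ such that f − c ∈ C₀(G). -/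
/-!
The idea is to pass from `f` to `f²`. Since `S` is symmetric and `f ≥ 0`, for an edge `{g, h}` one
has `|f(g)² - f(h)²| = f(g)|f(g) - f(h)| + f(h)|f(g) - f(h)| ≤ a(g) + a(h)`, where
`a(g) = ‖f(g) · δf(g)‖` is summable. It then suffices to show that `F = f²` converges at infinity
(`exists_tendsto_of_increments`), for then so does `f = √F`.

Given `ε > 0`, choose a ball `B(r)` outside which every finite sum of `a` is less than `ε / 2`. Two
points in the infinite component of `G ∖ B(r)` are joined by a path in `G ∖ B(r)` without repeated
vertices, so the values of `F` at them differ by at most twice the sum of `a` over the path, hence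
by less than `ε`. The infinite component is cofinite (`exists_cofinite_connected`) because every
component meets the finite sphere of radius `r + 1`, so that there are only finitely many
components. Thus `F` is Cauchy along the cofinite filter.
-/

open Filter Topology
open scoped RealInnerProductSpace

noncomputable section

/-- The Cayley graph of `(G, S)`: `g` and `h` are adjacent iff `g ≠ h` and they differ by a
generator (for symmetric `S` this is `g⁻¹ h ∈ S`). -/
def cayleyGraph {G : Type*} [Group G] (S : Finset G) : SimpleGraph G :=
  SimpleGraph.fromRel fun g h => g⁻¹ * h ∈ S

/-- `(G, S)` is one-ended: for every `r`, the subgraph of the Cayley graph induced on the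
complement of the ball `B(r)` has exactly one infinite connected component. -/
def OneEnded {G : Type*} [Group G] (S : Finset G) : Prop :=
  ∀ r : ℕ,
    ∃! c : ((cayleyGraph S).induce {g : G | r < wordLength S g}).ConnectedComponent,
      c.supp.Infinite

section WordLength

variable {G : Type*} [Group G] {S : Finset G}

lemma wordLength_le (l : List G) (hl : ∀ x ∈ l, x ∈ S) : wordLength S l.prod ≤ l.length :=
  Nat.sInf_le ⟨l, rfl, hl, rfl⟩

/-- Every element of length `n + 1` has a neighbour of length `n`. -/
lemma exists_pred (hS : IsSymmGen S) {g : G} {n : ℕ} (hg : wordLength S g = n + 1) :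
    ∃ h, ∃ s ∈ S, g = h * s ∧ wordLength S h = n := by
  obtain ⟨l, hl, hlS, hlg⟩ := exists_word hS g
  have hne : l ≠ [] := by rintro rfl; simp at hl; omega
  obtain ⟨l', s, rfl⟩ := List.eq_nil_or_concat' l |>.resolve_left hne
  have h1 : wordLength S l'.prod ≤ l'.length :=
    wordLength_le _ fun x hx => hlS x (by simp [hx])
  refine ⟨l'.prod, s, hlS s (by simp), by simpa using hlg.symm, ?_⟩
  obtain ⟨m, hm, hmS, hmg⟩ := exists_word hS l'.prod
  have h2 : wordLength S (m ++ [s]).prod ≤ (m ++ [s]).length := by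
    refine wordLength_le _ fun x hx => ?_
    rcases List.mem_append.1 hx with h | h
    · exact hmS x h
    · exact hlS x (by simp [List.mem_singleton.1 h])
  have h3 : (m ++ [s]).prod = g := by rw [← hlg]; simp [hmg]
  rw [h3] at h2
  simp at h2 hl
  omega

lemma finite_sphere (hS : IsSymmGen S) (n : ℕ) : {g : G | wordLength S g = n}.Finite := by
  induction n with
  | zero =>
    refine (Set.finite_singleton (1 : G)).subset fun g hg => ?_
    obtain ⟨l, hl, -, hlg⟩ := exists_word hS g
    rw [show wordLength S g = 0 from hg, List.length_eq_zero_iff] at hl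
    simp [← hlg, hl]
  | succ n ih =>
    refine (Set.Finite.image2 (· * ·) ih S.finite_toSet).subset fun g hg => ?_
    obtain ⟨h, s, hs, rfl, hh⟩ := exists_pred hS hg
    exact ⟨h, hh, s, hs, rfl⟩

lemma finite_ball (hS : IsSymmGen S) (n : ℕ) : {g : G | wordLength S g ≤ n}.Finite := by
  refine ((Set.finite_Iic n).biUnion fun k _ => finite_sphere hS k).subset fun g hg => ?_
  exact Set.mem_biUnion (show wordLength S g ∈ Set.Iic n from hg) rfl

/-- Following a geodesic towards the identity, each point outside `B(r)` is joined outside `B(r)`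
to a point of the sphere of radius `r + 1`. -/
lemma exists_reachable_sphere (hS : IsSymmGen S) (r n : ℕ) :
    ∀ x : {g : G | r < wordLength S g}, wordLength S (x : G) = r + 1 + n →
      ∃ y : {g : G | r < wordLength S g}, wordLength S (y : G) = r + 1 ∧
        ((cayleyGraph S).induce {g : G | r < wordLength S g}).Reachable y x := by
  induction n with
  | zero => exact fun x hx => ⟨x, hx, .refl _⟩
  | succ n ih =>
    rintro ⟨g, hg⟩ hx
    obtain ⟨h, s, hs, rfl, hh⟩ := exists_pred hS (n := r + 1 + n) hx
    have hr : r < wordLength S h := by omega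
    obtain ⟨y, hy, hyr⟩ := ih ⟨h, hr⟩ hh
    refine ⟨y, hy, hyr.trans (SimpleGraph.Adj.reachable ?_)⟩
    simp only [SimpleGraph.comap_adj, Function.Embedding.subtype_apply, cayleyGraph,
      SimpleGraph.fromRel_adj]
    refine ⟨fun he => ?_, Or.inl (by simpa using hs)⟩
    simp only at hx
    rw [← he] at hx
    omega

/-- The complement of a ball has only finitely many components, as each of them meets the finite
sphere just outside the ball. -/
lemma finite_components (hS : IsSymmGen S) (r : ℕ) :
    Finite ((cayleyGraph S).induce {g : G | r < wordLength S g}).ConnectedComponent := by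
  let T := {x : {g : G | r < wordLength S g} | wordLength S (x : G) = r + 1}
  have hT : Finite T := by
    have : T.Finite := Set.Finite.preimage Subtype.val_injective.injOn (finite_sphere hS (r + 1))
    exact this
  refine Finite.of_surjective
    (fun x : T => SimpleGraph.connectedComponentMk _ (x : {g : G | r < wordLength S g})) ?_
  intro c
  induction c using SimpleGraph.ConnectedComponent.ind with
  | _ v =>
    have hv : r < wordLength S (v : G) := v.2
    obtain ⟨y, hy, hyr⟩ := exists_reachable_sphere hS r (wordLength S (v : G) - (r + 1)) v
      (by omega)
    exact ⟨⟨y, hy⟩, SimpleGraph.ConnectedComponent.sound hyr⟩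

/-- In a one-ended group, all but finitely many elements lie in a single component of the
complement of a given ball. -/
lemma exists_cofinite_connected (hS : IsSymmGen S) (hone : OneEnded S) (r : ℕ) :
    ∃ c : ((cayleyGraph S).induce {g : G | r < wordLength S g}).ConnectedComponent,
      ∀ᶠ g in cofinite, ∃ h : r < wordLength S g,
        SimpleGraph.connectedComponentMk _ (⟨g, h⟩ : {g : G | r < wordLength S g}) = c := by
  obtain ⟨c, -, huniq⟩ := hone r
  refine ⟨c, ?_⟩
  have := finite_components hS r
  have hfin : (⋃ d ∈ {d | d ≠ c}, (Subtype.val '' d.supp : Set G)).Finite := by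
    refine Set.Finite.biUnion (Set.toFinite _) fun d hd => Set.Finite.image _ ?_
    by_contra hinf
    exact hd (huniq d hinf)
  refine ((finite_ball hS r).union hfin).subset fun g hg => ?_
  by_cases h : r < wordLength S g
  · refine Or.inr (Set.mem_biUnion
      (x := SimpleGraph.connectedComponentMk _ (⟨g, h⟩ : {g : G | r < wordLength S g})) ?_
      ⟨⟨g, h⟩, rfl, rfl⟩)
    exact fun he => hg ⟨h, he⟩
  · exact Or.inl (not_lt.1 h)

end WordLength

/-- Telescoping along a walk: if increments of `F` across edges are at most `a g + a h`, the total
increment is controlled by the sum of `a` over the vertices. The extra term `a x` on the left makes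
the induction close. -/
lemma abs_sub_add_le_walk {V : Type*} {H : SimpleGraph V} {F a : V → ℝ}
    (hFa : ∀ x y, H.Adj x y → |F x - F y| ≤ a x + a y) (ha : ∀ x, 0 ≤ a x)
    {x y : V} (p : H.Walk x y) :
    |F x - F y| + a x ≤ 2 * (p.support.map a).sum := by
  induction p with
  | @nil u => simpa using by linarith [ha u]
  | @cons u v w h p ih =>
    have h1 := abs_sub_le (F u) (F v) (F w)
    have h2 := hFa _ _ h
    simp only [SimpleGraph.Walk.support_cons, List.map_cons, List.sum_cons]
    linarith

/-- A function whose increments across edges are bounded by a summable function of the endpoints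
converges at infinity on a one-ended group. -/
lemma exists_tendsto_of_increments {G : Type*} [Group G] {S : Finset G} (hS : IsSymmGen S)
    (hone : OneEnded S) {F a : G → ℝ} (ha : ∀ g, 0 ≤ a g) (hsum : Summable a)
    (hFa : ∀ g h, (cayleyGraph S).Adj g h → |F g - F h| ≤ a g + a h) :
    ∃ c, Tendsto F cofinite (𝓝 c) := by
  classical
  rcases (cofinite : Filter G).eq_or_neBot with hbot | hne
  · exact ⟨0, by simp [hbot]⟩
  suffices hC : Cauchy (Filter.map F cofinite) from cauchy_iff_exists_le_nhds.1 hC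
  refine Metric.cauchy_iff.2 ⟨inferInstance, fun ε hε => ?_⟩
  obtain ⟨s, hs⟩ := summable_iff_vanishing_norm.1 hsum (ε / 2) (half_pos hε)
  -- A ball containing the finite set `s` off which the tails of `a` are small.
  let r := s.sup (wordLength S)
  obtain ⟨c, hc⟩ := exists_cofinite_connected hS hone r
  refine ⟨_, Filter.image_mem_map hc, ?_⟩
  rintro _ ⟨x, ⟨hx, hxc⟩, rfl⟩ _ ⟨y, ⟨hy, hyc⟩, rfl⟩
  obtain ⟨p, hp⟩ := (SimpleGraph.ConnectedComponent.exact (hxc.trans hyc.symm)).exists_isPath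
  have h1 := abs_sub_add_le_walk (F := fun v => F v.1) (a := fun v => a v.1)
    (fun u v h => hFa u.1 v.1 h) (fun v => ha v.1) p
  -- A path visits each vertex once, so the sum over its support is a sum over a finite set.
  have hnd : (p.support.map Subtype.val).Nodup :=
    hp.support_nodup.map Subtype.val_injective
  have h2 : (p.support.map fun v => a v.1).sum = ∑ g ∈ (p.support.map Subtype.val).toFinset, a g := by
    rw [List.sum_toFinset _ hnd, List.map_map]; rfl
  have h3 := hs (p.support.map Subtype.val).toFinset (by
    rw [Finset.disjoint_left]
    intro g hg hgs
    obtain ⟨v, -, rfl⟩ := List.mem_map.1 (List.mem_toFinset.1 hg)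
    exact absurd (Finset.le_sup (f := wordLength S) hgs) (not_le.2 v.2))
  rw [← h2] at h3
  have h4 := (le_abs_self _).trans_lt h3
  rw [Real.dist_eq]
  have := ha x
  simp only at h1
  linarith

/-- **Positive functions with summable `‖f · δf‖` on one-ended groups are constant up to
`C₀`.** If `G` is a one-ended finitely generated group and `f : G → ℝ` is bounded with
`f ≥ 0` and `∑ g, ‖f(g) · δf(g)‖ < ∞` (euclidean norm on `ℝ^S`), then
`f ∈ C₀(G) + ℝ·1`. -/
theorem pos_fdelf_summable_const_mod_c0_of_oneEnded {G : Type*} [Group G] [Countable G]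
    (S : Finset G) (hS : IsSymmGen S) (hone : OneEnded S)
    (f : G → ℝ) (hbdd : ∃ M : ℝ, ∀ g, |f g| ≤ M) (hpos : ∀ g, 0 ≤ f g)
    (hsum : Summable fun g => Real.sqrt (∑ s ∈ S, (f g * (f g - f (g * s))) ^ 2)) :
    ∃ c : ℝ, Tendsto (fun g => f g - c) cofinite (𝓝 0) := by
  set a : G → ℝ := fun g => Real.sqrt (∑ s ∈ S, (f g * (f g - f (g * s))) ^ 2) with ha_def
  have hle : ∀ g, ∀ s ∈ S, f g * |f g - f (g * s)| ≤ a g := by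
    intro g s hs
    refine Real.le_sqrt_of_sq_le ?_
    rw [mul_pow, sq_abs, ← mul_pow]
    exact Finset.single_le_sum (f := fun s => (f g * (f g - f (g * s))) ^ 2)
      (fun _ _ => sq_nonneg _) hs
  have hmul : ∀ g, ∀ s ∈ S, |f g ^ 2 - f (g * s) ^ 2| ≤ a g + a (g * s) := by
    intro g s hs
    have h1 := hle g s hs
    have h2 := hle (g * s) s⁻¹ (hS.1 s hs)
    rw [mul_inv_cancel_right, abs_sub_comm] at h2
    rw [sq_sub_sq, abs_mul, abs_of_nonneg (add_nonneg (hpos _) (hpos _))]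
    linarith
  obtain ⟨c, hc⟩ := exists_tendsto_of_increments (F := fun g => f g ^ 2) hS hone
    (fun g => Real.sqrt_nonneg _) hsum (by
      intro g h hadj
      rw [cayleyGraph, SimpleGraph.fromRel_adj] at hadj
      rcases hadj.2 with hs | hs
      · simpa using hmul g _ hs
      · have := hmul h _ hs
        rw [mul_inv_cancel_left, abs_sub_comm, add_comm] at this
        exact this)
  refine ⟨Real.sqrt c, ?_⟩
  have h := ((Real.continuous_sqrt.tendsto c).comp hc).sub_const (Real.sqrt c)
  rw [sub_self] at h
  refine h.congr fun g => ?_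
  simp [Real.sqrt_sq (hpos g)]
end
end
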